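/- Let (Ω, P) be a finite probability space with binary random variables ỹ, y* : Ω → {0,1}, with P(y*=0) > 0, P(y*=1) > 0, P(ỹ=0) > 0, and P(ỹ=1) > 0, and noise rates P(ỹ=0|y*=1) < 1/2 and P(ỹ=1|y*=0) < 1/2. With p, LB, UB, CPS, CNS defined as in DeCoLe (p(ω)=P(ỹ=1|y*=y*(ω)), LB = E[p|ỹ=1], UB = E[p|ỹ=0]), suppose additionally P(ỹ=1|y*=1) > LB and P(ỹ=1|y*=0) < UB fail to hold with equality only on null sets, i.e. assume strictly P(ỹ=1|y*=0) < P(ỹ=1|y*=1). Then every truly positive instance lies in CPS and every truly negative instance lies in CNS; consequently, the set of instances flagged by DeCoLe, {ỹ=0} ∩ CPS ∪ {ỹ=1} ∩ CNS, equals exactly the true mislabeled set {ω : ỹ(ω) ≠ y*(ω)} provided moreover LB > P(ỹ=1|y*=0) and UB < P(ỹ=1|y*=1). -/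

import Mathlib

open Finset

noncomputable def Pr {Ω : Type} [Fintype Ω] (w : Ω → ℝ) (A : Set Ω) : ℝ :=
  ∑ ω, A.indicator w ω

noncomputable def cPr {Ω : Type} [Fintype Ω] (w : Ω → ℝ) (A B : Set Ω) : ℝ :=
  Pr w (A ∩ B) / Pr w B

noncomputable def cExp {Ω : Type} [Fintype Ω] (w : Ω → ℝ) (f : Ω → ℝ) (B : Set Ω) : ℝ :=
  (∑ ω, B.indicator (fun ω' => w ω' * f ω') ω) / Pr w B

/-!
The score `p` takes only two values, `p₀` on the true negatives and `p₁` on the true positives, so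
each threshold, being an average of `p`, lies between `min p₀ p₁` and `max p₀ p₁`. As `p₀ < LB`, the
bound `LB ≤ max p₀ p₁` forces `LB ≤ p₁`; as `UB < p₁`, the bound `min p₀ p₁ ≤ UB` forces `p₀ ≤ UB`.
Hence the positives are exactly the instances in CPS, the negatives exactly those in CNS.
-/

section ConditionalExpectation

variable {Ω : Type} [Fintype Ω] {w : Ω → ℝ} {B : Set Ω}

theorem Pr_nonneg (hw : ∀ ω, 0 ≤ w ω) (B : Set Ω) : 0 ≤ Pr w B :=
  sum_nonneg fun ω _ => Set.indicator_nonneg (fun ω _ => hw ω) ω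

theorem cExp_const (hB : Pr w B ≠ 0) (c : ℝ) : cExp w (fun _ => c) B = c := by
  simp only [cExp, Set.indicator_mul_const, ← sum_mul]
  exact mul_div_cancel_left₀ c hB

theorem cExp_mono (hw : ∀ ω, 0 ≤ w ω) {f g : Ω → ℝ} (hfg : ∀ ω ∈ B, f ω ≤ g ω) :
    cExp w f B ≤ cExp w g B :=
  div_le_div_of_nonneg_right
    (sum_le_sum fun ω _ =>
      Set.indicator_le_indicator' fun hω => mul_le_mul_of_nonneg_left (hfg ω hω) (hw ω))
    (Pr_nonneg hw B)

theorem cExp_comp_le_max (hw : ∀ ω, 0 ≤ w ω) (hB : Pr w B ≠ 0) (s : Fin 2 → ℝ) (y : Ω → Fin 2) :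
    cExp w (s ∘ y) B ≤ max (s 0) (s 1) := by
  have hs : ∀ i, s i ≤ max (s 0) (s 1) := Fin.forall_fin_two.2 ⟨le_max_left _ _, le_max_right _ _⟩
  calc cExp w (s ∘ y) B ≤ cExp w (fun _ => max (s 0) (s 1)) B := cExp_mono hw fun ω _ => hs (y ω)
    _ = max (s 0) (s 1) := cExp_const hB _

theorem min_le_cExp_comp (hw : ∀ ω, 0 ≤ w ω) (hB : Pr w B ≠ 0) (s : Fin 2 → ℝ) (y : Ω → Fin 2) :
    min (s 0) (s 1) ≤ cExp w (s ∘ y) B := by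
  have hs : ∀ i, min (s 0) (s 1) ≤ s i := Fin.forall_fin_two.2 ⟨min_le_left _ _, min_le_right _ _⟩
  calc min (s 0) (s 1) = cExp w (fun _ => min (s 0) (s 1)) B := (cExp_const hB _).symm
    _ ≤ cExp w (s ∘ y) B := cExp_mono hw fun ω _ => hs (y ω)

end ConditionalExpectation

section Flagging

variable {Ω R : Type*}

/-- The instances that DeCoLe flags as mislabeled when the observed labels are `ty`, the scores are
`p` and the thresholds are `L` and `U`: the observed negatives in CPS (`L ≤ p`) and the observed
positives in CNS (`p ≤ U`). -/
def flagged [LE R] (ty : Ω → Fin 2) (p : Ω → R) (L U : R) : Set Ω :=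
  ({ω | ty ω = 0} ∩ {ω | L ≤ p ω}) ∪ ({ω | ty ω = 1} ∩ {ω | p ω ≤ U})

theorem flagged_eq_setOf_ne [LE R] {ty ys : Ω → Fin 2} {p : Ω → R} {L U : R}
    (hL : ∀ ω, L ≤ p ω ↔ ys ω = 1) (hU : ∀ ω, p ω ≤ U ↔ ys ω = 0) :
    flagged ty p L U = {ω | ty ω ≠ ys ω} := by
  ext ω
  have ne_iff : ∀ i j : Fin 2, (i = 0 ∧ j = 1) ∨ (i = 1 ∧ j = 0) ↔ i ≠ j := by decide
  simpa only [flagged, Set.mem_union, Set.mem_inter_iff, Set.mem_ofPred_eq, hL, hU]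
    using ne_iff (ty ω) (ys ω)

theorem le_apply_iff_eq_one [Preorder R] {s : Fin 2 → R} {L : R} (h₀ : s 0 < L) (h₁ : L ≤ s 1) :
    ∀ i, L ≤ s i ↔ i = 1 :=
  Fin.forall_fin_two.2 ⟨by simp [h₀.not_ge], by simp [h₁]⟩

theorem apply_le_iff_eq_zero [Preorder R] {s : Fin 2 → R} {U : R} (h₀ : s 0 ≤ U) (h₁ : U < s 1) :
    ∀ i, s i ≤ U ↔ i = 0 :=
  Fin.forall_fin_two.2 ⟨by simp [h₀], by simp [h₁.not_ge]⟩

end Flagging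

theorem stmt5_general {Ω : Type} [Fintype Ω] (w : Ω → ℝ) (ty ys : Ω → Fin 2)
    (hw : ∀ ω, 0 ≤ w ω)
    (hty0 : 0 < Pr w {ω | ty ω = 0}) (hty1 : 0 < Pr w {ω | ty ω = 1})
    (p : Ω → ℝ) (hp : ∀ ω, p ω = cPr w {ω' | ty ω' = 1} {ω' | ys ω' = ys ω})
    (LB UB : ℝ)
    (hLB : LB = cExp w p {ω | ty ω = 1})
    (hUB : UB = cExp w p {ω | ty ω = 0})
    (hLBsep : cPr w {ω | ty ω = 1} {ω | ys ω = 0} < LB)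
    (hUBsep : UB < cPr w {ω | ty ω = 1} {ω | ys ω = 1}) :
    (∀ ω, ys ω = 1 → LB ≤ p ω) ∧ (∀ ω, ys ω = 0 → p ω ≤ UB) ∧
    flagged ty p LB UB = {ω | ty ω ≠ ys ω} := by
  let s : Fin 2 → ℝ := fun i => cPr w {ω | ty ω = 1} {ω | ys ω = i}
  obtain rfl : p = s ∘ ys := funext hp
  have hLB_le : LB ≤ s 1 :=
    (le_max_iff.1 (hLB ▸ cExp_comp_le_max hw hty1.ne' s ys)).resolve_left hLBsep.not_ge
  have hle_UB : s 0 ≤ UB :=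
    (min_le_iff.1 (hUB ▸ min_le_cExp_comp hw hty0.ne' s ys)).resolve_right hUBsep.not_ge
  have hCPS : ∀ ω, LB ≤ s (ys ω) ↔ ys ω = 1 :=
    fun ω => le_apply_iff_eq_one hLBsep hLB_le (ys ω)
  have hCNS : ∀ ω, s (ys ω) ≤ UB ↔ ys ω = 0 :=
    fun ω => apply_le_iff_eq_zero hle_UB hUBsep (ys ω)
  exact ⟨fun ω => (hCPS ω).2, fun ω => (hCNS ω).2, flagged_eq_setOf_ne hCPS hCNS⟩

/-- Sharpened Theorem 1: with strict separation of the class-conditional ideal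
probabilities by the thresholds, the flagged set equals the true mislabeled set. -/
theorem stmt5 {Ω : Type} [Fintype Ω] (w : Ω → ℝ) (ty ys : Ω → Fin 2)
    (hw : ∀ ω, 0 ≤ w ω) (hsum : ∑ ω, w ω = 1)
    (hys0 : 0 < Pr w {ω | ys ω = 0}) (hys1 : 0 < Pr w {ω | ys ω = 1})
    (hty0 : 0 < Pr w {ω | ty ω = 0}) (hty1 : 0 < Pr w {ω | ty ω = 1})
    (hn0 : cPr w {ω | ty ω = 0} {ω | ys ω = 1} < 1/2)
    (hn1 : cPr w {ω | ty ω = 1} {ω | ys ω = 0} < 1/2)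
    (p : Ω → ℝ) (hp : ∀ ω, p ω = cPr w {ω' | ty ω' = 1} {ω' | ys ω' = ys ω})
    (LB UB : ℝ)
    (hLB : LB = cExp w p {ω | ty ω = 1})
    (hUB : UB = cExp w p {ω | ty ω = 0})
    (hstrict : cPr w {ω | ty ω = 1} {ω | ys ω = 0} < cPr w {ω | ty ω = 1} {ω | ys ω = 1})
    (hLBsep : cPr w {ω | ty ω = 1} {ω | ys ω = 0} < LB)
    (hUBsep : UB < cPr w {ω | ty ω = 1} {ω | ys ω = 1}) :
    (∀ ω, ys ω = 1 → LB ≤ p ω) ∧ (∀ ω, ys ω = 0 → p ω ≤ UB) ∧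
    (({ω | ty ω = 0} ∩ {ω | LB ≤ p ω}) ∪ ({ω | ty ω = 1} ∩ {ω | p ω ≤ UB})
      = {ω | ty ω ≠ ys ω}) :=
  stmt5_general w ty ys hw hty0 hty1 p hp LB UB hLB hUB hLBsep hUBsep
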